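/- arXiv:1312.7729 — 2 statements merged into one kernel-verified Lean document; each statement's English description precedes it below -/
import Mathlib

section
/- For every nonnegative integer n, odd positive integers a and b, real q with 0<q<1, real x>0, a positive integer r, and a Dirichlet character χ of odd conductor d: [2]_{q^b}^r · [a]_q^n · Σ_{j_1,...,j_r=0}^{da-1} (-1)^{j_1+⋯+j_r} (Π_{l=1}^r χ(j_l)) q^{b(j_1+⋯+j_r)} E^{(r)}_{n,χ,q^a}(bx + (b/a)(j_1+⋯+j_r)) = [2]_{q^a}^r · [b]_q^n · Σ_{j_1,...,j_r=0}^{db-1} (-1)^{j_1+⋯+j_r} (Π_{l=1}^r χ(j_l)) q^{a(j_1+⋯+j_r)} E^{(r)}_{n,χ,q^b}(ax + (a/b)(j_1+⋯+j_r)). -/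
open scoped BigOperators

/-- The `q`-number `[x]_q = (1 - q^x)/(1 - q)` for real `q` and real `x`. -/
noncomputable def qNum (q x : ℝ) : ℝ := (1 - q ^ x) / (1 - q)

/-- Generalized `q`-Euler polynomial of order `r` attached to a Dirichlet character `χ`:
`E^{(r)}_{n,χ,q}(x) = [2]_q^r Σ' (-q)^{m₁+⋯+m_r} (Π χ(mᵢ)) [m₁+⋯+m_r+x]_q^n`. -/
noncomputable def qEuler (r : ℕ) {d : ℕ} (χ : DirichletCharacter ℂ d) (q : ℝ)
    (n : ℕ) (x : ℝ) : ℂ :=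
  ((qNum q 2 : ℝ) : ℂ) ^ r *
    ∑' m : Fin r → ℕ,
      ((-(q : ℂ)) ^ (∑ i, m i) * (∏ i, χ ((m i : ZMod d))) *
        ((qNum q ((∑ i, m i : ℕ) + x) : ℝ) : ℂ) ^ n)

/-- Dirichlet-type multiple `q`-`l`-function
`l_{q,r}(s,x|χ) = [2]_q^r Σ' (-q)^{m₁+⋯+m_r} (Π χ(mᵢ)) [m₁+⋯+m_r+x]_q^{-s}`,
with principal complex powers of positive real bases. -/
noncomputable def qL (q : ℝ) (r : ℕ) {d : ℕ} (χ : DirichletCharacter ℂ d)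
    (s : ℂ) (x : ℝ) : ℂ :=
  ((qNum q 2 : ℝ) : ℂ) ^ r *
    ∑' m : Fin r → ℕ,
      ((-(q : ℂ)) ^ (∑ i, m i) * (∏ i, χ ((m i : ZMod d))) *
        ((qNum q ((∑ i, m i : ℕ) + x) : ℝ) : ℂ) ^ (-s))

/-- The `q`-power sum
`S^{(r)}_{n,i,q}(a|χ) = Σ_{j₁,…,j_r=0}^{a-1} (-1)^{j₁+⋯+j_r} (Π χ(j_l)) q^{(j₁+⋯+j_r)(n-i+1)} [j₁+⋯+j_r]_q^i`. -/
noncomputable def qS (r : ℕ) {d : ℕ} (χ : DirichletCharacter ℂ d)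
    (n i : ℕ) (q : ℝ) (a : ℕ) : ℂ :=
  ∑ j ∈ Fintype.piFinset (fun _ : Fin r => Finset.range a),
    ((-1 : ℂ) ^ (∑ l, j l) * (∏ l, χ ((j l : ZMod d))) *
      (q : ℂ) ^ ((∑ l, j l) * (n - i + 1)) *
      ((qNum q ((∑ l, j l : ℕ)) : ℝ) : ℂ) ^ i)

/-!
The order-`r` sums are indexed by `r`-tuples of naturals; write `|m|` for the sum of the entries of
`m`. After clearing `[2]` and `[a]`, the left-hand side is
`∑_{j < da} ∑_{m ≥ 0} w j * w m * h (b|j| + a|m|)`, where `w m = (-1)^|m| ∏ χ(m_i)` and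
`h s = q^s [s + abx]_q^n`. Splitting `m = i + db k` with `i < db` turns the argument of `h` into
`b|j| + a|i| + dab|k|`, so the `k`-part can be transferred from `m` to `j`: the term at
`(j, i + db k)` equals the one at `(j + da k, i)`, because `χ` has period `d` and `da`, `db` have
the same parity. Resumming over `j + da k` gives the right-hand side.
-/

section Tuples

variable {ι : Type*} [Fintype ι]

theorem summable_prod_pi_of_nonneg {β : Type*} {f : ι → β → ℝ} (hf0 : ∀ i t, 0 ≤ f i t)
    (hf : ∀ i, Summable (f i)) : Summable fun m : ι → β ↦ ∏ i, f i (m i) := by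
  classical
  refine summable_of_sum_le (c := ∏ i, ∑' t, f i t)
    (fun m ↦ Finset.prod_nonneg fun i _ ↦ hf0 i (m i)) fun s ↦ ?_
  let box : Finset (ι → β) := Fintype.piFinset fun i ↦ s.image (· i)
  have hbox : s ⊆ box := fun m hm ↦
    Fintype.mem_piFinset.2 fun i ↦ Finset.mem_image_of_mem (· i) hm
  calc ∑ m ∈ s, ∏ i, f i (m i)
      ≤ ∑ m ∈ box, ∏ i, f i (m i) :=
        Finset.sum_le_sum_of_subset_of_nonneg hbox fun m _ _ ↦
          Finset.prod_nonneg fun i _ ↦ hf0 i (m i)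
    _ = ∏ i, ∑ t ∈ s.image (· i), f i t := (Finset.prod_univ_sum _ _).symm
    _ ≤ ∏ i, ∑' t, f i t :=
        Finset.prod_le_prod (fun i _ ↦ Finset.sum_nonneg fun t _ ↦ hf0 i t) fun i _ ↦
          (hf i).sum_le_tsum _ fun t _ ↦ hf0 i t

theorem summable_pow_sum {q : ℝ} (hq0 : 0 ≤ q) (hq1 : q < 1) :
    Summable fun m : ι → ℕ ↦ q ^ ∑ i, m i := by
  simp only [← Finset.prod_pow_eq_pow_sum]
  exact summable_prod_pi_of_nonneg (fun _ _ ↦ pow_nonneg hq0 _)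
    fun _ ↦ summable_geometric_of_lt_one hq0 hq1

variable [DecidableEq ι] {E : Type*} [AddCommGroup E] [UniformSpace E] [IsUniformAddGroup E]
  [CompleteSpace E] [T0Space E]

theorem tsum_eq_sum_piFinset_range_tsum (N : ℕ) [NeZero N] {f : (ι → ℕ) → E} (hf : Summable f) :
    ∑' m, f m =
      ∑ i ∈ Fintype.piFinset fun _ ↦ Finset.range N, ∑' k : ι → ℕ, f (i + N • k) := by
  let e : (ι → Fin N) × (ι → ℕ) ≃ (ι → ℕ) :=
    ((Equiv.piCongrRight fun _ ↦ Nat.divModEquiv N).trans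
      ((Equiv.arrowProdEquivProdArrow _ _ _).trans (Equiv.prodComm _ _))).symm
  have he (i : ι → Fin N) (k : ι → ℕ) : e (i, k) = (fun l ↦ (i l : ℕ)) + N • k := by
    funext l
    simp [e, mul_comm, add_comm]
  have hsplit : ∑' m, f m = ∑ i, ∑' k, f (e (i, k)) :=
    calc ∑' m, f m = ∑' p, f (e p) := (e.tsum_eq f).symm
      _ = ∑' i, ∑' k, f (e (i, k)) := (e.summable_iff.2 hf).tsum_prod
      _ = ∑ i, ∑' k, f (e (i, k)) := tsum_fintype _
  simp only [hsplit, he]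
  refine Finset.sum_bij (fun i _ l ↦ (i l : ℕ)) (by simp) ?_ ?_ fun _ _ ↦ rfl
  · exact fun i _ i' _ h ↦ funext fun l ↦ Fin.ext (congrFun h l)
  · exact fun m hm ↦
      ⟨fun l ↦ ⟨m l, Finset.mem_range.1 (Fintype.mem_piFinset.1 hm l)⟩, Finset.mem_univ _, rfl⟩

theorem sum_piFinset_range_tsum_comm_of_shift {M N : ℕ} [NeZero M] [NeZero N]
    {F : (ι → ℕ) → (ι → ℕ) → E} (hF : ∀ j i k, F j (i + N • k) = F (j + M • k) i)
    (hright : ∀ j, Summable (F j)) (hleft : ∀ i, Summable fun j ↦ F j i) :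
    ∑ j ∈ Fintype.piFinset fun _ ↦ Finset.range M, ∑' m, F j m =
      ∑ i ∈ Fintype.piFinset fun _ ↦ Finset.range N, ∑' m, F m i := by
  simp only [fun j ↦ tsum_eq_sum_piFinset_range_tsum N (hright j),
    fun i ↦ tsum_eq_sum_piFinset_range_tsum M (hleft i), hF]
  exact Finset.sum_comm

end Tuples

section AlternatingWeight

variable {ι : Type*} [Fintype ι] {R : Type*} [CommRing R] {𝕜 : Type*} [NormedField 𝕜] {d : ℕ}

/-- The weight `(-1)^{m₁+⋯+m_r} χ(m₁)⋯χ(m_r)` of a tuple `m`, for tuples indexed by any finite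
type. -/
def alternatingWeight (χ : DirichletCharacter R d) (m : ι → ℕ) : R :=
  (-1) ^ (∑ i, m i) * ∏ i, χ (m i : ZMod d)

theorem alternatingWeight_add_smul (χ : DirichletCharacter R d) (c : ℕ) (m k : ι → ℕ) :
    alternatingWeight χ (m + (d * c) • k) =
      ((-1) ^ (d * c)) ^ (∑ i, k i) * alternatingWeight χ m := by
  simp only [alternatingWeight, Pi.add_apply, Pi.smul_apply, smul_eq_mul, Finset.sum_add_distrib,
    ← Finset.mul_sum, pow_add, pow_mul, Nat.cast_add, Nat.cast_mul, CharP.cast_eq_zero, zero_mul,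
    add_zero]
  ring

theorem norm_alternatingWeight_le_one (χ : DirichletCharacter 𝕜 d) (m : ι → ℕ) :
    ‖alternatingWeight χ m‖ ≤ 1 := by
  simp only [alternatingWeight, norm_mul, norm_pow, norm_neg, norm_one, one_pow, one_mul, norm_prod]
  exact Finset.prod_le_one (fun _ _ ↦ norm_nonneg _) fun _ _ ↦ χ.norm_le_one _

theorem summable_alternatingWeight_mul [CompleteSpace 𝕜] (χ : DirichletCharacter 𝕜 d) {q C : ℝ}
    (hq0 : 0 ≤ q) (hq1 : q < 1) {h : ℕ → 𝕜} (hh : ∀ s, ‖h s‖ ≤ C * q ^ s) {a : ℕ} (ha : a ≠ 0)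
    (c : ℕ) : Summable fun m : ι → ℕ ↦ alternatingWeight χ m * h (c + a * ∑ i, m i) := by
  refine .of_norm_bounded
    ((summable_pow_sum (pow_nonneg hq0 a) (pow_lt_one₀ hq0 hq1 ha)).mul_left (C * q ^ c))
    fun m ↦ ?_
  calc ‖alternatingWeight χ m * h (c + a * ∑ i, m i)‖
      ≤ 1 * (C * q ^ (c + a * ∑ i, m i)) := by
        rw [norm_mul]
        exact mul_le_mul (norm_alternatingWeight_le_one χ m) (hh _) (norm_nonneg _) zero_le_one
    _ = C * q ^ c * (q ^ a) ^ ∑ i, m i := by rw [pow_add, pow_mul]; ring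

theorem sum_alternatingWeight_mul_tsum_symm [DecidableEq ι] [CompleteSpace 𝕜]
    (χ : DirichletCharacter 𝕜 d) (hd : d ≠ 0) {a b : ℕ} (ha : a ≠ 0) (hb : b ≠ 0)
    (hab : Even (d * a) ↔ Even (d * b)) {q C : ℝ} (hq0 : 0 ≤ q) (hq1 : q < 1) {h : ℕ → 𝕜}
    (hh : ∀ s, ‖h s‖ ≤ C * q ^ s) :
    ∑ j ∈ Fintype.piFinset fun _ : ι ↦ Finset.range (d * a), alternatingWeight χ j *
        ∑' m : ι → ℕ, alternatingWeight χ m * h (b * ∑ l, j l + a * ∑ l, m l) =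
      ∑ j ∈ Fintype.piFinset fun _ : ι ↦ Finset.range (d * b), alternatingWeight χ j *
        ∑' m : ι → ℕ, alternatingWeight χ m * h (a * ∑ l, j l + b * ∑ l, m l) := by
  have : NeZero (d * a) := ⟨mul_ne_zero hd ha⟩
  have : NeZero (d * b) := ⟨mul_ne_zero hd hb⟩
  let F (j m : ι → ℕ) : 𝕜 :=
    alternatingWeight χ j * (alternatingWeight χ m * h (b * ∑ l, j l + a * ∑ l, m l))
  have hF_swap (j m : ι → ℕ) : F m j =
      alternatingWeight χ j * (alternatingWeight χ m * h (a * ∑ l, j l + b * ∑ l, m l)) := by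
    simp only [F, add_comm (b * _), mul_left_comm]
  have hF_shift (j i k : ι → ℕ) : F j (i + (d * b) • k) = F (j + (d * a) • k) i := by
    have hsum : b * ∑ l, j l + a * ∑ l, (i + (d * b) • k) l =
        b * ∑ l, (j + (d * a) • k) l + a * ∑ l, i l := by
      simp only [Pi.add_apply, Pi.smul_apply, smul_eq_mul, Finset.sum_add_distrib, ← Finset.mul_sum]
      ring
    simp only [F, hsum, alternatingWeight_add_smul, neg_one_pow_congr hab]
    ring
  simp only [← tsum_mul_left, ← hF_swap]
  refine sum_piFinset_range_tsum_comm_of_shift hF_shift (fun j ↦ ?_) fun i ↦ ?_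
  · exact (summable_alternatingWeight_mul χ hq0 hq1 hh ha _).mul_left _
  · exact ((summable_alternatingWeight_mul χ hq0 hq1 hh hb _).mul_left _).congr
      fun m ↦ (hF_swap i m).symm

end AlternatingWeight

theorem qNum_mul_qNum_pow {q : ℝ} (hq : 0 ≤ q) (a : ℕ) (y : ℝ) :
    qNum q a * qNum (q ^ a) y = qNum q (a * y) := by
  simp only [qNum, Real.rpow_mul hq, Real.rpow_natCast]
  rcases eq_or_ne (1 - q ^ a) 0 with hqa | hqa
  · simp [(sub_eq_zero.1 hqa).symm]
  · rw [mul_comm, div_mul_div_cancel₀ hqa]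

theorem abs_qNum_le_of_le {q y z : ℝ} (hq0 : 0 < q) (hq1 : q < 1) (hzy : z ≤ y) :
    |qNum q y| ≤ (1 + q ^ z) / (1 - q) := by
  rw [qNum, abs_div, abs_of_pos (sub_pos.2 hq1)]
  refine div_le_div_of_nonneg_right ?_ (sub_pos.2 hq1).le
  calc |1 - q ^ y| ≤ |1| + |q ^ y| := abs_sub _ _
    _ = 1 + q ^ y := by rw [abs_one, abs_of_pos (Real.rpow_pos_of_pos hq0 y)]
    _ ≤ 1 + q ^ z := by gcongr 1 + ?_; exact Real.rpow_le_rpow_of_exponent_ge hq0 hq1.le hzy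

/-- The factor `q^s [s + y]_q^n` of the term of `E^{(r)}_{n,χ,q}(y)` at a tuple with sum `s`; what
remains of that term is the `alternatingWeight` of the tuple. -/
noncomputable def qEulerKernel (q : ℝ) (n : ℕ) (y : ℝ) (s : ℕ) : ℂ :=
  (q : ℂ) ^ s * (qNum q (s + y) : ℂ) ^ n

theorem qEuler_eq_tsum_alternatingWeight (r : ℕ) {d : ℕ} (χ : DirichletCharacter ℂ d) (q : ℝ)
    (n : ℕ) (x : ℝ) : qEuler r χ q n x = (qNum q 2 : ℂ) ^ r *
      ∑' m : Fin r → ℕ, alternatingWeight χ m * qEulerKernel q n x (∑ i, m i) := by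
  rw [qEuler]
  congr! 3 with m
  rw [alternatingWeight, qEulerKernel, neg_pow]
  ring

theorem norm_qEulerKernel_le {q : ℝ} (hq0 : 0 < q) (hq1 : q < 1) (n : ℕ) (y : ℝ) (s : ℕ) :
    ‖qEulerKernel q n y s‖ ≤ ((1 + q ^ y) / (1 - q)) ^ n * q ^ s := by
  rw [qEulerKernel, norm_mul, norm_pow, norm_pow, Complex.norm_real, Complex.norm_real,
    Real.norm_of_nonneg hq0.le, Real.norm_eq_abs, mul_comm]
  gcongr
  exact abs_qNum_le_of_le hq0 hq1 (le_add_of_nonneg_left s.cast_nonneg)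

theorem qEulerKernel_pow_base {q : ℝ} (hq : 0 ≤ q) {a : ℕ} (ha : a ≠ 0) (n : ℕ) (y : ℝ)
    (s t : ℕ) : (qNum q a : ℂ) ^ n * ((q : ℂ) ^ t * qEulerKernel (q ^ a) n (y + t / a) s) =
      qEulerKernel q n (a * y) (t + a * s) := by
  have harg : ((t + a * s : ℕ) : ℝ) + a * y = a * (s + (y + t / a)) := by
    have : (a : ℝ) ≠ 0 := Nat.cast_ne_zero.2 ha
    push_cast
    field_simp
    ring
  rw [qEulerKernel, qEulerKernel, harg, ← qNum_mul_qNum_pow hq]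
  push_cast
  ring

theorem sum_alternatingWeight_mul_qEuler {q : ℝ} (hq : 0 ≤ q) {a : ℕ} (ha : a ≠ 0) (b n r : ℕ)
    (x : ℝ) {d : ℕ} (χ : DirichletCharacter ℂ d) (J : Finset (Fin r → ℕ)) :
    (qNum q a : ℂ) ^ n * ∑ j ∈ J, ((-1 : ℂ) ^ (∑ l, j l) * (∏ l, χ (j l : ZMod d)) *
        (q : ℂ) ^ (b * ∑ l, j l) *
          qEuler r χ (q ^ a) n (b * x + ((b : ℝ) / a) * (∑ l, j l))) =
      (qNum (q ^ a) 2 : ℂ) ^ r * ∑ j ∈ J, alternatingWeight χ j * ∑' m : Fin r → ℕ,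
        alternatingWeight χ m *
          qEulerKernel q n (a * (b * x)) (b * ∑ l, j l + a * ∑ l, m l) := by
  rw [Finset.mul_sum, Finset.mul_sum]
  refine Finset.sum_congr rfl fun j _ ↦ ?_
  have harg : (b : ℝ) / a * (∑ l, j l : ℕ) = (b * ∑ l, j l : ℕ) / a := by
    push_cast
    ring
  simp only [qEuler_eq_tsum_alternatingWeight, harg, ← qEulerKernel_pow_base hq ha,
    mul_left_comm (alternatingWeight χ _) ((qNum q a : ℂ) ^ n),
    mul_left_comm (alternatingWeight χ _) ((q : ℂ) ^ _), tsum_mul_left]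
  rw [alternatingWeight]
  ring

theorem symmetry_qEuler_general (n : ℕ) {a b : ℕ} (ha : a ≠ 0) (hb : b ≠ 0) {q : ℝ} (hq0 : 0 < q)
    (hq1 : q < 1) (x : ℝ) (r : ℕ) {d : ℕ} (hd : d ≠ 0) (hab : Even (d * a) ↔ Even (d * b))
    (χ : DirichletCharacter ℂ d) :
    ((qNum (q ^ b) 2 : ℝ) : ℂ) ^ r * ((qNum q a : ℝ) : ℂ) ^ n *
      ∑ j ∈ Fintype.piFinset (fun _ : Fin r => Finset.range (d * a)),
        ((-1 : ℂ) ^ (∑ l, j l) * (∏ l, χ ((j l : ZMod d))) * (q : ℂ) ^ (b * ∑ l, j l) *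
          qEuler r χ (q ^ a) n (b * x + ((b : ℝ) / a) * (∑ l, j l))) =
    ((qNum (q ^ a) 2 : ℝ) : ℂ) ^ r * ((qNum q b : ℝ) : ℂ) ^ n *
      ∑ j ∈ Fintype.piFinset (fun _ : Fin r => Finset.range (d * b)),
        ((-1 : ℂ) ^ (∑ l, j l) * (∏ l, χ ((j l : ZMod d))) * (q : ℂ) ^ (a * ∑ l, j l) *
          qEuler r χ (q ^ b) n (a * x + ((a : ℝ) / b) * (∑ l, j l))) := by
  rw [mul_assoc, mul_assoc, sum_alternatingWeight_mul_qEuler hq0.le ha,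
    sum_alternatingWeight_mul_qEuler hq0.le hb, mul_left_comm (b : ℝ) (a : ℝ) x,
    sum_alternatingWeight_mul_tsum_symm χ hd ha hb hab hq0.le hq1
      (norm_qEulerKernel_le hq0 hq1 n _), mul_left_comm]

/-- Theorem 2: symmetry identity for the generalized higher-order `q`-Euler polynomials. -/
theorem symmetry_qEuler (n : ℕ) (a b : ℕ) (ha0 : 0 < a) (ha : Odd a) (hb0 : 0 < b) (hb : Odd b)
    (q : ℝ) (hq0 : 0 < q) (hq1 : q < 1) (x : ℝ) (hx : 0 < x)
    (r : ℕ) (hr : 0 < r) (d : ℕ) (hd : Odd d) (χ : DirichletCharacter ℂ d) :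
    ((qNum (q ^ b) 2 : ℝ) : ℂ) ^ r * ((qNum q a : ℝ) : ℂ) ^ n *
      ∑ j ∈ Fintype.piFinset (fun _ : Fin r => Finset.range (d * a)),
        ((-1 : ℂ) ^ (∑ l, j l) * (∏ l, χ ((j l : ZMod d))) * (q : ℂ) ^ (b * ∑ l, j l) *
          qEuler r χ (q ^ a) n (b * x + ((b : ℝ) / a) * (∑ l, j l))) =
    ((qNum (q ^ a) 2 : ℝ) : ℂ) ^ r * ((qNum q b : ℝ) : ℂ) ^ n *
      ∑ j ∈ Fintype.piFinset (fun _ : Fin r => Finset.range (d * b)),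
        ((-1 : ℂ) ^ (∑ l, j l) * (∏ l, χ ((j l : ZMod d))) * (q : ℂ) ^ (a * ∑ l, j l) *
          qEuler r χ (q ^ b) n (a * x + ((a : ℝ) / b) * (∑ l, j l))) := by
  have hab : Even (d * a) ↔ Even (d * b) :=
    iff_of_false (Nat.not_even_iff_odd.2 (hd.mul ha)) (Nat.not_even_iff_odd.2 (hd.mul hb))
  exact symmetry_qEuler_general n ha0.ne' hb0.ne' hq0 hq1 x r hd.pos.ne' hab χ
end

section
/- For every nonnegative integer n, odd positive integers a and b, real q with 0<q<1, real x, a positive integer r, and a Dirichlet character χ of odd conductor d: [2]_{q^b}^r Σ_{i=0}^{n} C(n,i) [a]_q^{n-i} [b]_q^{i} E^{(r)}_{n-i,χ,q^a}(bx) S^{(r)}_{n,i,q^b}(ad|χ) = [2]_{q^a}^r Σ_{i=0}^{n} C(n,i) [b]_q^{n-i} [a]_q^{i} E^{(r)}_{n-i,χ,q^b}(ax) S^{(r)}_{n,i,q^a}(bd|χ), where C(n,i) is the binomial coefficient. -/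
open scoped BigOperators

/-!
Multiplicativity `[a]_q [y]_{q^a} = [ay]_q` and the addition rule `[u + v]_q = [u]_q + q^u [v]_q`
make `[aM + bJ + abx]_q^n` a binomial sum of powers of `[M + bx]_{q^a}` and `[J]_{q^b}`. Hence, up
to the factor `[2]_{q^a}^r`, the left-hand sum is the single series
`∑ (∏ w(m_l) w(j_l)) q^N [N + abx]_q^n` with `N = a|m| + b|j|` and `w(k) = (-1)^k χ(k)`, taken over
`m_l ≥ 0` and `0 ≤ j_l < ad`. Since `a`, `b`, `d` are odd, `w` changes sign under shifts by `ad` and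
by `bd`. Moving the quotient `k` of `m_l = k b d + i` from `m_l` to `j_l` therefore changes neither
the weight nor `N`, and it exchanges the roles of `a` and `b`.
-/

section GeneralSums

theorem summable_pi_prod_of_nonneg {ι α : Type*} [Fintype ι] {f : ι → α → ℝ}
    (hf : ∀ i x, 0 ≤ f i x) (hs : ∀ i, Summable (f i)) :
    Summable fun m : ι → α => ∏ i, f i (m i) := by
  classical
  refine summable_of_sum_le (fun m => Finset.prod_nonneg fun i _ => hf i _)
    (c := ∏ i, ∑' x, f i x) fun s => ?_
  have subset_box : s ⊆ Fintype.piFinset fun i => s.image (· i) := fun m hm =>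
    Fintype.mem_piFinset.2 fun i => Finset.mem_image_of_mem _ hm
  calc ∑ m ∈ s, ∏ i, f i (m i)
      ≤ ∑ m ∈ Fintype.piFinset fun i => s.image (· i), ∏ i, f i (m i) :=
        Finset.sum_le_sum_of_subset_of_nonneg subset_box fun m _ _ =>
          Finset.prod_nonneg fun i _ => hf i _
    _ = ∏ i, ∑ x ∈ s.image (· i), f i x := (Finset.prod_univ_sum _ _).symm
    _ ≤ ∏ i, ∑' x, f i x :=
        Finset.prod_le_prod (fun i _ => Finset.sum_nonneg fun x _ => hf i x) fun i _ =>
          (hs i).sum_le_tsum _ fun x _ => hf i x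

theorem summable_norm_prod_mul_comp_sum {ι 𝕜 : Type*} [Fintype ι] [NormedField 𝕜]
    {w f : ℕ → 𝕜} {p C : ℝ} (hp0 : 0 ≤ p) (hp1 : p < 1) (hw : ∀ k, ‖w k‖ ≤ 1)
    (hf : ∀ N, ‖f N‖ ≤ p ^ N * C) :
    Summable fun m : ι → ℕ => ‖(∏ l, w (m l)) * f (∑ l, m l)‖ := by
  have summable_pow_sum : Summable fun m : ι → ℕ => p ^ ∑ l, m l := by
    simpa only [Finset.prod_pow_eq_pow_sum] using
      summable_pi_prod_of_nonneg (f := fun (_ : ι) k => p ^ k) (fun _ _ => pow_nonneg hp0 _)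
        fun _ => summable_geometric_of_lt_one hp0 hp1
  refine (summable_pow_sum.mul_right C).of_nonneg_of_le (fun _ => norm_nonneg _) fun m => ?_
  have prod_norm_le : ‖∏ l, w (m l)‖ ≤ 1 := by
    rw [norm_prod]
    exact Finset.prod_le_one (fun _ _ => norm_nonneg _) fun l _ => hw _
  calc ‖(∏ l, w (m l)) * f (∑ l, m l)‖
      = ‖∏ l, w (m l)‖ * ‖f (∑ l, m l)‖ := norm_mul _ _
    _ ≤ ‖f (∑ l, m l)‖ := mul_le_of_le_one_left (norm_nonneg _) prod_norm_le
    _ ≤ p ^ (∑ l, m l) * C := hf _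

theorem sum_mul_tsum_mul_tsum_of_summable_norm {I M J R : Type*} [NormedCommRing R]
    [CompleteSpace R] (s : Finset I) (c : I → R) {u : I → M → R} {v : I → J → R}
    (hu : ∀ i, Summable fun m => ‖u i m‖) (hv : ∀ i, Summable fun j => ‖v i j‖) :
    ∑ i ∈ s, c i * (∑' m, u i m) * ∑' j, v i j =
      ∑' p : M × J, ∑ i ∈ s, c i * (u i p.1 * v i p.2) := by
  have summable_mul (i : I) : Summable fun p : M × J => u i p.1 * v i p.2 :=
    summable_mul_of_summable_norm (hu i) (hv i)
  rw [Summable.tsum_finsetSum fun i _ => (summable_mul i).mul_left (c i)]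
  refine Finset.sum_congr rfl fun i _ => ?_
  rw [mul_assoc, tsum_mul_tsum_of_summable_norm (hu i) (hv i), (summable_mul i).tsum_mul_left]

theorem sum_piFinset_range {ι M : Type*} [Fintype ι] [DecidableEq ι] [AddCommMonoid M] (A : ℕ)
    (g : (ι → ℕ) → M) :
    ∑ j ∈ Fintype.piFinset (fun _ : ι => Finset.range A), g j =
      ∑ j : ι → Fin A, g fun l => j l := by
  symm
  refine Finset.sum_nbij (fun j l => (j l : ℕ)) (by simp) ?_ ?_ fun _ _ => rfl
  · exact fun j _ k _ h => funext fun l => Fin.ext (congrFun h l)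
  · intro j hj
    have lt_A (l : ι) : j l < A := Finset.mem_range.1 (Fintype.mem_piFinset.1 hj l)
    exact ⟨fun l => ⟨j l, lt_A l⟩, Finset.mem_coe.2 (Finset.mem_univ _), rfl⟩

end GeneralSums

section DoubleSeries

/-- The bijection `(k * B + i, j) ↦ (k * A + j, i)`, where `i < B` and `j < A`, which transfers the
quotient `k` from one coordinate to the other. -/
def swapDivMod (A B : ℕ) [NeZero A] [NeZero B] : ℕ × Fin A ≃ ℕ × Fin B :=
  calc ℕ × Fin A
    _ ≃ (ℕ × Fin B) × Fin A := (Nat.divModEquiv B).prodCongr (.refl _)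
    _ ≃ (ℕ × Fin A) × Fin B :=
      ⟨fun p => ((p.1.1, p.2), p.1.2), fun p => ((p.1.1, p.2), p.1.2), fun _ => rfl, fun _ => rfl⟩
    _ ≃ ℕ × Fin B := (Nat.divModEquiv A).symm.prodCongr (.refl _)

theorem swapDivMod_fst {A B : ℕ} [NeZero A] [NeZero B] (p : ℕ × Fin A) :
    (swapDivMod A B p).1 = p.2 + p.1 / B * A :=
  add_comm _ _

theorem swapDivMod_snd {A B : ℕ} [NeZero A] [NeZero B] (p : ℕ × Fin A) :
    ((swapDivMod A B p).2 : ℕ) = p.1 % B :=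
  rfl

variable {R : Type*} [CommRing R]

theorem apply_swapDivMod_mul_of_antiperiodic {w : ℕ → R} {A B : ℕ} [NeZero A] [NeZero B]
    (hA : Function.Antiperiodic w A) (hB : Function.Antiperiodic w B) (p : ℕ × Fin A) :
    w (swapDivMod A B p).1 * w (swapDivMod A B p).2 = w p.1 * w p.2 := by
  have shift_A : w (p.2 + p.1 / B * A) = (-1) ^ (p.1 / B) • w p.2 := hA.add_nsmul_eq _
  have shift_B : w (p.1 % B + p.1 / B * B) = (-1) ^ (p.1 / B) • w (p.1 % B) := hB.add_nsmul_eq _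
  rw [Nat.mod_add_div'] at shift_B
  rw [swapDivMod_fst, swapDivMod_snd, shift_A, shift_B, smul_mul_assoc, smul_mul_assoc, mul_comm]

theorem mul_swapDivMod_fst_add_mul_swapDivMod_snd (a b c : ℕ) [NeZero (a * c)]
    [NeZero (b * c)] (p : ℕ × Fin (a * c)) :
    b * (swapDivMod (a * c) (b * c) p).1 + a * (swapDivMod (a * c) (b * c) p).2 =
      a * p.1 + b * p.2 := by
  rw [swapDivMod_fst, swapDivMod_snd]
  conv_rhs => rw [← Nat.mod_add_div' p.1 (b * c)]
  ring

variable [TopologicalSpace R]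

/-- The series `∑ (∏ w(m_l) w(j_l)) F(a|m| + b|j|)` over `m_l ≥ 0` and `0 ≤ j_l < A`. The two
multi-indices are stored as the single family `z_l = (m_l, j_l)`, so that it can be reindexed
coordinatewise. -/
noncomputable def weightedDoubleSeries (ι : Type*) [Fintype ι] (w : ℕ → R) (a b A : ℕ)
    (F : ℕ → R) : R :=
  ∑' z : ι → ℕ × Fin A,
    (∏ l, w (z l).1 * w (z l).2) * F (∑ l, (a * (z l).1 + b * (z l).2))

theorem weightedDoubleSeries_symm {ι : Type*} [Fintype ι] {w : ℕ → R} {a b c : ℕ} [NeZero c]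
    (hw : Function.Antiperiodic w c) (ha : Odd a) (hb : Odd b) (F : ℕ → R) :
    weightedDoubleSeries ι w a b (a * c) F = weightedDoubleSeries ι w b a (b * c) F := by
  have : NeZero a := ⟨ha.pos.ne'⟩
  have : NeZero b := ⟨hb.pos.ne'⟩
  have antiperiodic_mul {k : ℕ} (hk : Odd k) : Function.Antiperiodic w (k * c) :=
    hk.elim fun n hn => by simpa only [hn, smul_eq_mul] using hw.odd_nsmul_antiperiodic n
  unfold weightedDoubleSeries
  rw [← (Equiv.piCongrRight fun _ : ι => swapDivMod (a * c) (b * c)).tsum_eq]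
  simp only [Equiv.piCongrRight_apply, Pi.map_apply, mul_swapDivMod_fst_add_mul_swapDivMod_snd,
    apply_swapDivMod_mul_of_antiperiodic (antiperiodic_mul ha) (antiperiodic_mul hb)]

theorem tsum_prod_eq_weightedDoubleSeries {ι : Type*} [Fintype ι] (w : ℕ → R) (a b A : ℕ)
    (F : ℕ → R) :
    ∑' p : (ι → ℕ) × (ι → Fin A), (∏ l, w (p.1 l)) * (∏ l, w (p.2 l)) *
        F (a * ∑ l, p.1 l + b * ∑ l, (p.2 l : ℕ)) = weightedDoubleSeries ι w a b A F := by
  unfold weightedDoubleSeries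
  rw [← (Equiv.arrowProdEquivProdArrow ι (fun _ => ℕ) fun _ => Fin A).tsum_eq]
  simp only [Equiv.arrowProdEquivProdArrow_apply, Finset.prod_mul_distrib, Finset.sum_add_distrib,
    Finset.mul_sum]

end DoubleSeries

section QNumbers

variable {q : ℝ}

theorem qNum_natCast_mul (hq : 0 ≤ q) {a : ℕ} (ha : q ^ a ≠ 1) (y : ℝ) :
    qNum q (a * y) = qNum q a * qNum (q ^ a) y := by
  unfold qNum
  rw [Real.rpow_natCast, Real.rpow_natCast_mul hq, div_mul_div_comm, mul_comm (1 - q),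
    mul_div_mul_left _ _ (sub_ne_zero.2 ha.symm)]

theorem qNum_add (hq : 0 < q) (u v : ℝ) : qNum q (u + v) = qNum q u + q ^ u * qNum q v := by
  unfold qNum
  rw [Real.rpow_add hq]
  ring

theorem abs_qNum_le (hq0 : 0 < q) (hq1 : q < 1) {x y : ℝ} (hxy : x ≤ y) :
    |qNum q y| ≤ (1 + q ^ x) / (1 - q) := by
  have one_sub_pos : 0 < 1 - q := sub_pos.2 hq1
  have rpow_le : q ^ y ≤ q ^ x := Real.rpow_le_rpow_of_exponent_ge hq0 hq1.le hxy
  have rpow_pos : 0 < q ^ y := Real.rpow_pos_of_pos hq0 y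
  unfold qNum
  rw [abs_div, abs_of_pos one_sub_pos]
  gcongr
  rw [abs_le]
  constructor <;> linarith

/-- `q^N [N + x]_q^n`, the part of the summand of `qEuler` that depends only on
`N = m_1 + ⋯ + m_r`, without its sign. -/
noncomputable def qEulerTerm (q : ℝ) (n : ℕ) (x : ℝ) (N : ℕ) : ℝ :=
  q ^ N * qNum q (N + x) ^ n

/-- `q^{J(n-i+1)} [J]_q^i`, the part of the summand of `qS` that depends only on
`J = j_1 + ⋯ + j_r`, without its sign; the subtraction `n - i` is truncated. -/
noncomputable def qPowerTerm (q : ℝ) (n i J : ℕ) : ℝ :=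
  q ^ (J * (n - i + 1)) * qNum q J ^ i

theorem abs_qEulerTerm_le (hq0 : 0 < q) (hq1 : q < 1) (n : ℕ) (x : ℝ) (N : ℕ) :
    |qEulerTerm q n x N| ≤ q ^ N * ((1 + q ^ x) / (1 - q)) ^ n := by
  unfold qEulerTerm
  rw [abs_mul, abs_pow, abs_pow, abs_of_pos hq0]
  gcongr
  exact abs_qNum_le hq0 hq1 (le_add_of_nonneg_left N.cast_nonneg)

theorem qNum_mul_add_mul_add_mul (hq : 0 < q) {a b : ℕ} (ha : q ^ a ≠ 1) (hb : q ^ b ≠ 1) (y : ℝ)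
    (M J : ℕ) :
    qNum q ((a * M + b * J : ℕ) + a * y) =
      qNum q b * qNum (q ^ b) J + (q ^ b) ^ J * (qNum q a * qNum (q ^ a) (M + y)) := by
  rw [← qNum_natCast_mul hq.le ha, ← qNum_natCast_mul hq.le hb, ← pow_mul, ← Real.rpow_natCast,
    Nat.cast_mul b J, ← qNum_add hq]
  push_cast
  ring_nf

theorem qEulerTerm_mul_add_mul (hq : 0 < q) {a b : ℕ} (ha : q ^ a ≠ 1) (hb : q ^ b ≠ 1)
    (n : ℕ) (y : ℝ) (M J : ℕ) :
    qEulerTerm q n (a * y) (a * M + b * J) =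
      ∑ i ∈ Finset.range (n + 1), n.choose i * qNum q a ^ (n - i) * qNum q b ^ i *
        (qEulerTerm (q ^ a) (n - i) y M * qPowerTerm (q ^ b) n i J) := by
  unfold qEulerTerm qPowerTerm
  rw [qNum_mul_add_mul_add_mul hq ha hb, add_pow, Finset.mul_sum]
  refine Finset.sum_congr rfl fun i _ => ?_
  rw [pow_add, pow_mul, pow_mul, pow_mul (q ^ b), pow_succ, mul_pow, mul_pow, mul_pow]
  ring

end QNumbers

section TwistedSeries

variable {d : ℕ} (χ : DirichletCharacter ℂ d)

/-- The character `χ` twisted by the alternating sign: the weight of each coordinate in both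
`qEuler` and `qS`. It is a function on `ℕ` since the sign is not well defined modulo an odd `d`. -/
noncomputable def altChar (k : ℕ) : ℂ := (-1) ^ k * χ k

theorem altChar_antiperiodic (hd : Odd d) : Function.Antiperiodic (altChar χ) d := by
  intro k
  simp only [altChar, pow_add, hd.neg_one_pow, Nat.cast_add, CharP.cast_eq_zero, add_zero]
  ring

theorem norm_altChar_le_one (k : ℕ) : ‖altChar χ k‖ ≤ 1 := by
  simpa [altChar] using χ.norm_le_one k

theorem prod_altChar {ι : Type*} [Fintype ι] (m : ι → ℕ) :
    ∏ l, altChar χ (m l) = (-1) ^ (∑ l, m l) * ∏ l, χ (m l) := by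
  simp only [altChar, Finset.prod_mul_distrib, Finset.prod_pow_eq_pow_sum]

theorem qEuler_eq_tsum_altChar (r : ℕ) (q : ℝ) (n : ℕ) (x : ℝ) :
    qEuler r χ q n x = (qNum q 2 : ℂ) ^ r *
      ∑' m : Fin r → ℕ, (∏ l, altChar χ (m l)) * (qEulerTerm q n x (∑ l, m l) : ℂ) := by
  unfold qEuler
  congr 1
  refine tsum_congr fun m => ?_
  rw [prod_altChar, qEulerTerm, neg_pow, Complex.ofReal_mul, Complex.ofReal_pow,
    Complex.ofReal_pow]
  ring

theorem qS_eq_tsum_altChar (r n i : ℕ) (q : ℝ) (A : ℕ) :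
    qS r χ n i q A =
      ∑' j : Fin r → Fin A, (∏ l, altChar χ (j l)) * (qPowerTerm q n i (∑ l, (j l : ℕ)) : ℂ) := by
  rw [qS, sum_piFinset_range, tsum_fintype]
  refine Finset.sum_congr rfl fun j _ => ?_
  rw [prod_altChar χ fun l => (j l : ℕ), qPowerTerm, Complex.ofReal_mul, Complex.ofReal_pow,
    Complex.ofReal_pow]
  ring

theorem summable_norm_altChar_mul_qEulerTerm {ι : Type*} [Fintype ι] {q : ℝ} (hq0 : 0 < q)
    (hq1 : q < 1) (n : ℕ) (x : ℝ) :
    Summable fun m : ι → ℕ => ‖(∏ l, altChar χ (m l)) * (qEulerTerm q n x (∑ l, m l) : ℂ)‖ :=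
  summable_norm_prod_mul_comp_sum (f := fun N => (qEulerTerm q n x N : ℂ)) hq0.le hq1
    (norm_altChar_le_one χ) fun N =>
      (Complex.norm_real _).trans_le (abs_qEulerTerm_le hq0 hq1 n x N)

theorem sum_qEuler_mul_qS_eq_weightedDoubleSeries {q : ℝ} (hq0 : 0 < q) (hq1 : q < 1) {a b : ℕ}
    (ha : a ≠ 0) (hb : b ≠ 0) (n r A : ℕ) (y : ℝ) :
    ∑ i ∈ Finset.range (n + 1), (n.choose i : ℂ) * (qNum q a : ℂ) ^ (n - i) *
        (qNum q b : ℂ) ^ i * qEuler r χ (q ^ a) (n - i) y * qS r χ n i (q ^ b) A =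
      (qNum (q ^ a) 2 : ℂ) ^ r *
        weightedDoubleSeries (Fin r) (altChar χ) a b A fun N => (qEulerTerm q n (a * y) N : ℂ) := by
  have hqa : q ^ a < 1 := pow_lt_one₀ hq0.le hq1 ha
  have hqb : q ^ b < 1 := pow_lt_one₀ hq0.le hq1 hb
  have summable_euler (i : ℕ) : Summable fun m : Fin r → ℕ =>
      ‖(∏ l, altChar χ (m l)) * (qEulerTerm (q ^ a) (n - i) y (∑ l, m l) : ℂ)‖ :=
    summable_norm_altChar_mul_qEulerTerm χ (pow_pos hq0 a) hqa (n - i) y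
  have summable_power (i : ℕ) : Summable fun j : Fin r → Fin A =>
      ‖(∏ l, altChar χ (j l)) * (qPowerTerm (q ^ b) n i (∑ l, (j l : ℕ)) : ℂ)‖ :=
    (hasSum_fintype _).summable
  simp only [qEuler_eq_tsum_altChar, qS_eq_tsum_altChar, mul_left_comm _ (_ ^ r) (tsum _)]
  simp only [mul_assoc ((qNum (q ^ a) 2 : ℂ) ^ r)]
  rw [← Finset.mul_sum, sum_mul_tsum_mul_tsum_of_summable_norm _ _ summable_euler summable_power,
    ← tsum_prod_eq_weightedDoubleSeries]
  congr 1
  refine tsum_congr fun p => ?_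
  rw [qEulerTerm_mul_add_mul hq0 hqa.ne hqb.ne, Complex.ofReal_sum, Finset.mul_sum]
  refine Finset.sum_congr rfl fun i _ => ?_
  push_cast
  ring

end TwistedSeries

/-- Theorem 3: symmetry identity relating the generalized higher-order `q`-Euler
polynomials and the `q`-power sums. -/
theorem symmetry_qEuler_qS (n : ℕ) (a b : ℕ) (ha0 : 0 < a) (ha : Odd a) (hb0 : 0 < b)
    (hb : Odd b) (q : ℝ) (hq0 : 0 < q) (hq1 : q < 1) (x : ℝ)
    (r : ℕ) (hr : 0 < r) (d : ℕ) (hd : Odd d) (χ : DirichletCharacter ℂ d) :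
    ((qNum (q ^ b) 2 : ℝ) : ℂ) ^ r *
      ∑ i ∈ Finset.range (n + 1),
        ((n.choose i : ℂ) * ((qNum q a : ℝ) : ℂ) ^ (n - i) * ((qNum q b : ℝ) : ℂ) ^ i *
          qEuler r χ (q ^ a) (n - i) (b * x) * qS r χ n i (q ^ b) (a * d)) =
    ((qNum (q ^ a) 2 : ℝ) : ℂ) ^ r *
      ∑ i ∈ Finset.range (n + 1),
        ((n.choose i : ℂ) * ((qNum q b : ℝ) : ℂ) ^ (n - i) * ((qNum q a : ℝ) : ℂ) ^ i *
          qEuler r χ (q ^ b) (n - i) (a * x) * qS r χ n i (q ^ a) (b * d)) := by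
  have : NeZero d := ⟨hd.pos.ne'⟩
  rw [sum_qEuler_mul_qS_eq_weightedDoubleSeries χ hq0 hq1 ha0.ne' hb0.ne',
    sum_qEuler_mul_qS_eq_weightedDoubleSeries χ hq0 hq1 hb0.ne' ha0.ne',
    weightedDoubleSeries_symm (altChar_antiperiodic χ hd) ha hb, mul_left_comm (a : ℝ) b x]
  exact mul_left_comm _ _ _
end
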